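/- Assume s = 3, q = p, p ∤ (m/t), d | h, and a = 0. Then: if (d,l) = (1,1) then N_t = (p^{t−1} − 1)/3; if (d,l) = (1,3) then N_t = (1/3)·( p^{t−1} − 1 − 2·(−1)^t·p^{(t−3)/3}·(p−1)·Re(π_3^{t/3}·ζ^{2·i_0}) ); if (d,l) = (3,1) then N_t = p^{t−1} − 1. Here the possible values of (d,l) are: (1,1) when 3 ∤ m/t and 3 ∤ t, (1,3) when 3 ∤ m/t and 3 | t, (3,1) when 3 | m/t. -/

import Mathlib

/-
On the subfield `E = F_{q^t}` the trace from `K` is `m/t` times the trace to `F`, and the norm from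
`K` is the `m/t`-th power of the norm to `F`. So for `p ∤ m/t` we count the nonzero `y ∈ E` of trace
zero for which `χ(N y)^{m/t} = χ(g)^h`, where `χ` is the cubic character. If `3 ∣ m/t` the condition
on the norm is vacuous; otherwise it reads `χ(N y) = ζ^{i₀}`, and orthogonality of cubic characters
leaves the sum `T` of `χ ∘ N` over the trace-zero elements of `E`.

Detecting trace zero with an additive character gives `q T = (∑_c χ⁻ᵗ(c)) G_E(χ ∘ N)`. This vanishes
unless `χ^t = 1`, and the Hasse–Davenport relation `G_E(χ ∘ N) = (-1)^{t-1} G(χ)^t` together with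
`G(χ)^3 = q J(χ, χ)` expresses the remaining case through `J(χ, χ)`.

For the Hasse–Davenport relation, extend `f ↦ χ((-1)^n f(0)) ψ(-f_{n-1})` to a multiplicative
function `w` on monic polynomials. Its sums over the degrees `0`, `1` and `≥ 2` are `1`, `G(χ)` and
`0`, so the identity `∑_{g ∣ f} Λ(g) = deg f` gives `∑_{deg f = n} Λ(f) w(f) = (-1)^{n-1} G(χ)^n` by
induction on `n`. Grouping the elements of `E` by their characteristic polynomials turns the left
side into the Gauss sum over `E`.

Finally the involution `x ↦ 1 - x` shows that `χ(4) J(χ, χ) = a + b (2ω + 1)` in `ℤ[ω]` for some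
integers `a` and `b`. Here `a² + 3b² = p` and `a ≡ -1 (mod 3)`, and `J(χ, χ)` becomes a vanishing
power sum modulo a prime above `p`; together these force `(a, b) = (a₃, b₃)`.
-/

noncomputable section

open Complex Polynomial Classical

/-- `N_t(a,s,h)`: the number of elements `x` of the subfield `F_{q^t}` of `K = F_{q^m}`
with `Tr_{K/F}(x) = a` and `N_{K/F}(x) ∈ g^h·⟨g^s⟩`. -/
def NN (F K : Type*) [Field F] [Fintype F] [Field K] [Fintype K] [Algebra F K]
    (g : F) (s h t : ℕ) (a : F) : ℕ :=
  Nat.card {x : K // x ^ (Fintype.card F) ^ t = x ∧ Algebra.trace F K x = a ∧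
    ∃ k : ℕ, Algebra.norm F x = g ^ (h + s * k)}

section MonicPolynomials

open UniqueFactorizationMonoid
open Finset.HasAntidiagonal (antidiagonal mem_antidiagonal)

variable {F : Type*} [Field F]

theorem finite_setOf_monic_natDegree_eq (F : Type*) [Field F] [Finite F] (n : ℕ) :
    {f : F[X] | f.Monic ∧ f.natDegree = n}.Finite :=
  Set.finite_coe_iff.mp <|
    Finite.of_equiv _ ((monicEquivDegreeLT n).trans (degreeLTEquiv F n).toEquiv).symm

/-- The finite set of monic polynomials of degree `n` over a finite field. -/
def monicsOfDegree (F : Type*) [Field F] [Finite F] (n : ℕ) : Finset F[X] :=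
  (finite_setOf_monic_natDegree_eq F n).toFinset

theorem finite_setOf_monic_dvd [Finite F] {f : F[X]} (hf : f ≠ 0) :
    {g : F[X] | g.Monic ∧ g ∣ f}.Finite :=
  ((Set.finite_Iic f.natDegree).biUnion fun n _ ↦ finite_setOf_monic_natDegree_eq F n).subset
    fun _ hg ↦ Set.mem_biUnion (natDegree_le_of_dvd hg.2 hf) ⟨hg.1, rfl⟩

/-- The finite set of monic divisors of a polynomial over a finite field,
empty for the zero polynomial. -/
def monicDivisors [Finite F] (f : F[X]) : Finset F[X] :=
  if hf : f ≠ 0 then (finite_setOf_monic_dvd hf).toFinset else ∅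

/-- The von Mangoldt function on monic polynomials: `deg P` on the powers of a monic irreducible
`P`, and `0` elsewhere. -/
def polyVonMangoldt (f : F[X]) : ℕ :=
  if IsPrimePow f then (radical f).natDegree else 0

@[simp]
theorem mem_monicsOfDegree [Finite F] {n : ℕ} {f : F[X]} :
    f ∈ monicsOfDegree F n ↔ f.Monic ∧ f.natDegree = n := by
  simp [monicsOfDegree]

theorem mem_monicDivisors [Finite F] {f g : F[X]} (hf : f ≠ 0) :
    g ∈ monicDivisors f ↔ g.Monic ∧ g ∣ f := by
  simp [monicDivisors, hf]

theorem monicsOfDegree_zero [Finite F] : monicsOfDegree F 0 = {1} := by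
  ext f
  simp only [mem_monicsOfDegree, Finset.mem_singleton]
  exact ⟨fun h ↦ eq_one_of_monic_natDegree_zero h.1 h.2, by rintro rfl; simp⟩

theorem radical_pow_of_irreducible_monic {P : F[X]} (hP : Irreducible P) (hm : P.Monic) {k : ℕ}
    (hk : k ≠ 0) : radical (P ^ k) = P := by
  rw [radical_pow_of_prime hP.prime hk, hm.normalize_eq_self]

theorem polyVonMangoldt_pow {P : F[X]} (hP : Irreducible P) (hm : P.Monic) {k : ℕ} (hk : k ≠ 0) :
    polyVonMangoldt (P ^ k) = P.natDegree := by
  rw [polyVonMangoldt, if_pos (hP.prime.isPrimePow.pow hk),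
    radical_pow_of_irreducible_monic hP hm hk]

theorem exists_monic_irreducible_pow_eq {f : F[X]} (hf : f.Monic) (hpow : IsPrimePow f) :
    ∃ P : F[X], P.Monic ∧ Irreducible P ∧ ∃ k ≠ 0, P ^ k = f := by
  obtain ⟨P, k, hP, hk, rfl⟩ := hpow
  refine ⟨normalize P, monic_normalize hP.ne_zero, (normalize_associated P).symm.irreducible
    hP.irreducible, k, hk.ne', ?_⟩
  rw [← coe_normalizeHom, ← map_pow, coe_normalizeHom, hf.normalize_eq_self]

theorem pow_dvd_iff_le_count_normalizedFactors {P f : F[X]} (hP : Irreducible P) (hm : P.Monic)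
    (hf : f ≠ 0) {j : ℕ} :
    P ^ j ∣ f ↔ j ≤ (normalizedFactors f).count P := by
  rw [pow_dvd_iff_le_emultiplicity,
    emultiplicity_eq_count_normalizedFactors hP hf,
    hm.normalize_eq_self, Nat.cast_le]

theorem monic_of_mem_normalizedFactors {P f : F[X]}
    (hP : P ∈ normalizedFactors f) : P.Monic := by
  rw [← normalize_normalized_factor P hP]
  exact monic_normalize (irreducible_of_normalized_factor P hP).ne_zero

theorem natDegree_eq_sum_count_normalizedFactors {f : F[X]} (hf : f.Monic) :
    f.natDegree = ∑ P ∈ primeFactors f, (normalizedFactors f).count P * P.natDegree := by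
  conv_lhs => rw [← hf.normalize_eq_self, ← prod_normalizedFactors_eq hf.ne_zero]
  rw [natDegree_multiset_prod _ (zero_notMem_normalizedFactors f), Finset.sum_multiset_map_count]
  simp only [smul_eq_mul, toFinset_normalizedFactors]

theorem sum_polyVonMangoldt_monicDivisors [Finite F] {f : F[X]} (hf : f.Monic) :
    ∑ g ∈ monicDivisors f, polyVonMangoldt g = f.natDegree := by
  have hf0 := hf.ne_zero
  have hirr : ∀ P ∈ primeFactors f, Irreducible P := fun P hP ↦
    irreducible_of_normalized_factor P (mem_primeFactors.mp hP)
  have hmonic : ∀ P ∈ primeFactors f, P.Monic := fun P hP ↦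
    monic_of_mem_normalizedFactors (mem_primeFactors.mp hP)
  let powers : Finset ((_ : F[X]) × ℕ) :=
    (primeFactors f).sigma fun P ↦ Finset.Icc 1 ((normalizedFactors f).count P)
  have mem_powers {x} : x ∈ powers ↔
      x.1 ∈ primeFactors f ∧ 1 ≤ x.2 ∧ x.2 ≤ (normalizedFactors f).count x.1 := by
    rw [Finset.mem_sigma, Finset.mem_Icc]
  suffices h : ∑ x ∈ powers, x.1.natDegree = ∑ g ∈ monicDivisors f, polyVonMangoldt g by
    rw [← h, Finset.sum_sigma, natDegree_eq_sum_count_normalizedFactors hf]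
    simp only [Finset.sum_const, Nat.card_Icc, Nat.add_sub_cancel, smul_eq_mul]
  refine Finset.sum_of_injOn (fun x ↦ x.1 ^ x.2) ?_ ?_ ?_ ?_
  · rintro ⟨P, j⟩ hx ⟨Q, k⟩ hy (hxy : P ^ j = Q ^ k)
    obtain ⟨hP, hj, -⟩ := mem_powers.mp hx
    obtain ⟨hQ, hk, -⟩ := mem_powers.mp hy
    obtain rfl : P = Q := by
      rw [← radical_pow_of_irreducible_monic (hirr P hP) (hmonic P hP) (Nat.ne_of_gt hj), hxy,
        radical_pow_of_irreducible_monic (hirr Q hQ) (hmonic Q hQ) (Nat.ne_of_gt hk)]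
    rw [pow_injective_of_not_isUnit (hirr P hP).not_isUnit (hirr P hP).ne_zero hxy]
  · rintro ⟨P, j⟩ hx
    obtain ⟨hP, -, hj⟩ := mem_powers.mp hx
    exact (mem_monicDivisors hf0).mpr ⟨(hmonic P hP).pow j,
      (pow_dvd_iff_le_count_normalizedFactors (hirr P hP) (hmonic P hP) hf0).mpr hj⟩
  · intro g hg hgs
    obtain ⟨hgm, hgf⟩ := (mem_monicDivisors hf0).mp hg
    refine if_neg fun hpow ↦ hgs ?_
    obtain ⟨P, hm, hP, k, hk, rfl⟩ := exists_monic_irreducible_pow_eq hgm hpow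
    have hkP := (pow_dvd_iff_le_count_normalizedFactors hP hm hf0).mp hgf
    refine ⟨⟨P, k⟩, mem_powers.mpr ⟨mem_primeFactors.mpr ?_, by lia, hkP⟩, rfl⟩
    exact Multiset.count_pos.mp (by lia)
  · rintro ⟨P, j⟩ hx
    obtain ⟨hP, hj, -⟩ := mem_powers.mp hx
    exact (polyVonMangoldt_pow (hirr P hP) (hmonic P hP) (Nat.ne_of_gt hj)).symm

theorem sum_monicsOfDegree_sum_monicDivisors [Finite F] {M : Type*} [AddCommMonoid M]
    (a : F[X] → F[X] → M) (n : ℕ) :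
    ∑ f ∈ monicsOfDegree F n, ∑ g ∈ monicDivisors f, a f g =
      ∑ ij ∈ antidiagonal n,
        ∑ g ∈ monicsOfDegree F ij.1, ∑ h ∈ monicsOfDegree F ij.2, a (g * h) g := by
  simp_rw [← Finset.sum_product']
  rw [Finset.sum_sigma', Finset.sum_sigma']
  symm
  refine Finset.sum_bij (fun x _ ↦ ⟨x.2.1 * x.2.2, x.2.1⟩) ?_ ?_ ?_ fun _ _ ↦ rfl
  · rintro ⟨ij, g, h⟩ hx
    simp only [Finset.mem_sigma, mem_antidiagonal, Finset.mem_product, mem_monicsOfDegree] at hx ⊢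
    obtain ⟨hij, ⟨hg, hgi⟩, hh, hhj⟩ := hx
    exact ⟨⟨hg.mul hh, by rw [hg.natDegree_mul hh, hgi, hhj, hij]⟩,
      (mem_monicDivisors (hg.mul hh).ne_zero).mpr ⟨hg, dvd_mul_right g h⟩⟩
  · rintro ⟨⟨i, j⟩, g, h⟩ hx ⟨⟨i', j'⟩, g', h'⟩ hx' hxx'
    simp only [Finset.mem_sigma, Finset.mem_product, mem_monicsOfDegree] at hx hx'
    obtain ⟨-, ⟨hg, rfl⟩, -, rfl⟩ := hx
    obtain ⟨-, ⟨-, rfl⟩, -, rfl⟩ := hx'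
    simp only [Sigma.mk.injEq, heq_eq_eq] at hxx'
    obtain ⟨hmul, rfl⟩ := hxx'
    obtain rfl := mul_left_cancel₀ hg.ne_zero hmul
    rfl
  · rintro ⟨f, g⟩ hx
    obtain ⟨⟨hf, rfl⟩, hg⟩ := by simpa using hx
    obtain ⟨hgm, h, rfl⟩ := (mem_monicDivisors hf.ne_zero).mp hg
    have hh := hgm.of_mul_monic_left hf
    exact ⟨⟨(g.natDegree, h.natDegree), g, h⟩, by simp [hgm, hh, hgm.natDegree_mul hh], rfl⟩

theorem natCast_mul_sum_monicsOfDegree [Finite F] {R : Type*} [CommSemiring R] (a : F[X] → R)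
    (ha : ∀ f g : F[X], f.Monic → g.Monic → a (f * g) = a f * a g) (n : ℕ) :
    n * ∑ f ∈ monicsOfDegree F n, a f =
      ∑ ij ∈ antidiagonal n, (∑ g ∈ monicsOfDegree F ij.1, polyVonMangoldt g * a g) *
        ∑ h ∈ monicsOfDegree F ij.2, a h := by
  calc n * ∑ f ∈ monicsOfDegree F n, a f
      = ∑ f ∈ monicsOfDegree F n, ∑ g ∈ monicDivisors f, polyVonMangoldt g * a f := by
        rw [Finset.mul_sum]
        refine Finset.sum_congr rfl fun f hf ↦ ?_
        rw [mem_monicsOfDegree] at hf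
        rw [← Finset.sum_mul, ← Nat.cast_sum, sum_polyVonMangoldt_monicDivisors hf.1, hf.2]
    _ = _ := by
        rw [sum_monicsOfDegree_sum_monicDivisors (fun f g ↦ polyVonMangoldt g * a f)]
        refine Finset.sum_congr rfl fun ij _ ↦ ?_
        rw [Finset.sum_mul_sum]
        refine Finset.sum_congr rfl fun g hg ↦ Finset.sum_congr rfl fun h hh ↦ ?_
        rw [ha g h (mem_monicsOfDegree.mp hg).1 (mem_monicsOfDegree.mp hh).1, mul_assoc]

theorem eq_neg_one_pow_mul_of_antidiagonal_sum {R : Type*} [CommRing R] {A S : ℕ → R}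
    (hrec : ∀ n : ℕ, n * A n = ∑ ij ∈ antidiagonal n, S ij.1 * A ij.2)
    (h0 : A 0 = 1) (h2 : ∀ n, 2 ≤ n → A n = 0) (n : ℕ) : S (n + 1) = (-1) ^ n * A 1 ^ (n + 1) := by
  have hS0 : S 0 = 0 := by simpa [h0] using (hrec 0).symm
  induction n with
  | zero => simpa [Finset.Nat.sum_antidiagonal_succ', h0, hS0] using (hrec 1).symm
  | succ n ih =>
    have htail : ∑ ij ∈ antidiagonal n, S ij.1 * A (ij.2 + 1 + 1) = 0 :=
      Finset.sum_eq_zero fun ij _ ↦ by rw [h2 _ (by lia), mul_zero]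
    have hn := hrec (n + 1 + 1)
    rw [Finset.Nat.sum_antidiagonal_succ', Finset.Nat.sum_antidiagonal_succ', htail,
      h2 (n + 1 + 1) (by lia), h0, ih] at hn
    linear_combination -hn

end MonicPolynomials

section HasseDavenport

open Finset IntermediateField Module UniqueFactorizationMonoid

variable {F R : Type*} [Field F] [CommRing R]

/-- The weight of a monic polynomial in the proof of the Hasse–Davenport relation. If `f` is the
characteristic polynomial of `y`, then `(-1) ^ deg f * f.coeff 0` and `-f.nextCoeff` are the norm
and the trace of `y`. -/
def gaussWeight (χ : MulChar F R) (ψ : AddChar F R) (f : F[X]) : R :=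
  χ ((-1) ^ f.natDegree * f.coeff 0) * ψ (-f.nextCoeff)

theorem gaussWeight_one (χ : MulChar F R) (ψ : AddChar F R) : gaussWeight χ ψ 1 = 1 := by
  simp [gaussWeight, nextCoeff]

theorem gaussWeight_mul (χ : MulChar F R) (ψ : AddChar F R) {f g : F[X]} (hf : f.Monic)
    (hg : g.Monic) : gaussWeight χ ψ (f * g) = gaussWeight χ ψ f * gaussWeight χ ψ g := by
  have hconst : (-1 : F) ^ (f.natDegree + g.natDegree) * (f.coeff 0 * g.coeff 0) =
      ((-1) ^ f.natDegree * f.coeff 0) * ((-1) ^ g.natDegree * g.coeff 0) := by ring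
  rw [gaussWeight, hf.natDegree_mul hg, hf.nextCoeff_mul hg, mul_coeff_zero, neg_add,
    AddChar.map_add_eq_mul, hconst, map_mul, gaussWeight, gaussWeight]
  ring

theorem gaussWeight_add_C_mul_X_pow (χ : MulChar F R) (ψ : AddChar F R) {f : F[X]} {n : ℕ}
    (hf : f.natDegree = n + 2) (c : F) :
    gaussWeight χ ψ (f + C c * X ^ (n + 1)) = gaussWeight χ ψ f * ψ (-c) := by
  have hlt : (C c * X ^ (n + 1)).natDegree < f.natDegree :=
    (natDegree_C_mul_X_pow_le c _).trans_lt (by lia)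
  have hdeg := natDegree_add_eq_left_of_natDegree_lt hlt
  rw [gaussWeight, gaussWeight, nextCoeff_of_natDegree_pos (by lia),
    nextCoeff_of_natDegree_pos (by lia), hdeg, hf]
  simp [AddChar.map_add_eq_mul, mul_assoc, mul_comm (ψ (-c))]

theorem add_C_mul_X_pow_mem_monicsOfDegree [Finite F] {n : ℕ} {f : F[X]}
    (hf : f ∈ monicsOfDegree F (n + 1)) (c : F) : f + C c * X ^ n ∈ monicsOfDegree F (n + 1) := by
  rw [mem_monicsOfDegree] at hf ⊢
  have hlt : (C c * X ^ n).degree < f.degree := by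
    rw [degree_eq_natDegree hf.1.ne_zero, hf.2]
    exact (degree_C_mul_X_pow_le n c).trans_lt (by exact_mod_cast n.lt_succ_self)
  exact ⟨hf.1.add_of_left hlt, by rw [natDegree_add_eq_left_of_degree_lt hlt, hf.2]⟩

theorem sum_gaussWeight_monicsOfDegree_zero [Finite F] (χ : MulChar F R) (ψ : AddChar F R) :
    ∑ f ∈ monicsOfDegree F 0, gaussWeight χ ψ f = 1 := by
  rw [monicsOfDegree_zero, sum_singleton, gaussWeight_one]

theorem sum_gaussWeight_monicsOfDegree_one [Fintype F] (χ : MulChar F R) (ψ : AddChar F R) :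
    ∑ f ∈ monicsOfDegree F 1, gaussWeight χ ψ f = gaussSum χ ψ := by
  symm
  refine sum_bij (fun c _ ↦ X - C c) (fun c _ ↦ ?_) (fun a _ b _ h ↦ ?_) (fun f hf ↦ ?_)
    fun c _ ↦ ?_
  · simp [monic_X_sub_C]
  · simpa using h
  · rw [mem_monicsOfDegree] at hf
    exact ⟨-f.coeff 0, mem_univ _, by rw [map_neg, sub_neg_eq_add, ← hf.1.eq_X_add_C hf.2]⟩
  · simp [gaussWeight, nextCoeff_X_sub_C]

theorem sum_gaussWeight_monicsOfDegree_of_two_le [Finite F] [IsDomain R] (χ : MulChar F R)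
    {ψ : AddChar F R} (hψ : ψ ≠ 1) {n : ℕ} (hn : 2 ≤ n) :
    ∑ f ∈ monicsOfDegree F n, gaussWeight χ ψ f = 0 := by
  obtain ⟨n, rfl⟩ := Nat.exists_eq_add_of_le' hn
  obtain ⟨c, hc⟩ := AddChar.ne_one_iff.mp hψ
  have hshift : ∑ f ∈ monicsOfDegree F (n + 2), gaussWeight χ ψ f =
      (∑ f ∈ monicsOfDegree F (n + 2), gaussWeight χ ψ f) * ψ c := by
    rw [sum_mul]
    refine sum_bij' (fun f _ ↦ f + C c * X ^ (n + 1)) (fun f _ ↦ f + C (-c) * X ^ (n + 1))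
      (fun f hf ↦ add_C_mul_X_pow_mem_monicsOfDegree hf c)
      (fun f hf ↦ add_C_mul_X_pow_mem_monicsOfDegree hf (-c)) (by simp) (by simp) fun f hf ↦ ?_
    rw [gaussWeight_add_C_mul_X_pow χ ψ (mem_monicsOfDegree.mp hf).2, mul_assoc,
      ← AddChar.map_add_eq_mul, neg_add_cancel, AddChar.map_zero_eq_one, mul_one]
  exact by_contra fun h ↦ hc ((mul_eq_left₀ h).mp hshift.symm)

theorem sum_polyVonMangoldt_mul_gaussWeight [Fintype F] [IsDomain R] (χ : MulChar F R)
    {ψ : AddChar F R} (hψ : ψ ≠ 1) (n : ℕ) :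
    ∑ f ∈ monicsOfDegree F (n + 1), polyVonMangoldt f * gaussWeight χ ψ f =
      (-1) ^ n * gaussSum χ ψ ^ (n + 1) := by
  rw [← sum_gaussWeight_monicsOfDegree_one χ ψ]
  exact eq_neg_one_pow_mul_of_antidiagonal_sum
    (S := fun i ↦ ∑ f ∈ monicsOfDegree F i, polyVonMangoldt f * gaussWeight χ ψ f)
    (natCast_mul_sum_monicsOfDegree _ fun _ _ ↦ gaussWeight_mul χ ψ)
    (sum_gaussWeight_monicsOfDegree_zero χ ψ)
    (fun _ ↦ sum_gaussWeight_monicsOfDegree_of_two_le χ hψ) n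

variable (E : Type*) [Field E] [Algebra F E]

/-- The lift of a multiplicative character of `F` to a finite extension `E`, along the norm. -/
def normLift [FiniteDimensional F E] (χ : MulChar F R) : MulChar E R where
  toMonoidHom := χ.toMonoidHom.comp (Algebra.norm F)
  map_nonunit' y hy := by
    obtain rfl : y = 0 := by simpa using hy
    exact (congrArg χ Algebra.norm_zero).trans χ.map_zero

/-- The lift of an additive character of `F` to an extension `E`, along the trace. -/
def traceLift (ψ : AddChar F R) : AddChar E R :=
  ψ.compAddMonoidHom (Algebra.trace F E).toAddMonoidHom

variable {E}

@[simp]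
theorem normLift_apply [FiniteDimensional F E] (χ : MulChar F R) (y : E) :
    normLift E χ y = χ (Algebra.norm F y) := rfl

@[simp]
theorem traceLift_apply (ψ : AddChar F R) (y : E) :
    traceLift E ψ y = ψ (Algebra.trace F E y) := rfl

theorem natDegree_minpoly_mul_finrank_adjoin [FiniteDimensional F E] (y : E) :
    (minpoly F y).natDegree * finrank F⟮y⟯ E = finrank F E := by
  rw [← adjoin.finrank (IsIntegral.of_finite F y), finrank_mul_finrank]

theorem gaussWeight_minpoly_pow [FiniteDimensional F E] (χ : MulChar F R) (ψ : AddChar F R)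
    (y : E) :
    gaussWeight χ ψ (minpoly F y ^ finrank F⟮y⟯ E) = normLift E χ y * traceLift E ψ y := by
  have hy : IsIntegral F y := IsIntegral.of_finite F y
  have hnorm : Algebra.norm F y =
      ((-1) ^ (minpoly F y).natDegree * (minpoly F y).coeff 0) ^ finrank F⟮y⟯ E := by
    rw [Algebra.norm_eq_norm_adjoin, ← adjoin.powerBasis_gen hy,
      Algebra.PowerBasis.norm_gen_eq_coeff_zero_minpoly, adjoin.powerBasis_gen hy, minpoly_gen,
      adjoin.powerBasis_dim hy]
  rw [gaussWeight, normLift_apply, traceLift_apply, hnorm, trace_eq_finrank_mul_minpoly_nextCoeff,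
    (minpoly.monic hy).nextCoeff_pow, natDegree_pow, coeff_zero_eq_eval_zero, eval_pow,
    ← coeff_zero_eq_eval_zero, mul_pow, ← pow_mul, mul_comm (finrank _ _), nsmul_eq_mul, mul_neg]

theorem card_filter_minpoly_eq [Finite F] [Fintype E] {P : F[X]} (hP : Irreducible P)
    (hm : P.Monic) (hdvd : P.natDegree ∣ finrank F E) :
    #{y : E | minpoly F y = P} = P.natDegree := by
  have := Fintype.ofFinite F
  have hcard : Nat.card F ^ finrank F E = Fintype.card E := by
    rw [← Nat.card_eq_fintype_card, Module.natCard_eq_pow_finrank (K := F) (V := E)]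
  have hP_dvd : P ∣ X ^ Fintype.card E - X := by
    rw [← hcard]
    exact hP.natDegree_dvd_iff_dvd_X_pow_card_pow_sub_X.mp hdvd
  have hsplits : (P.map (algebraMap F E)).Splits :=
    (FiniteField.isSplittingField_sub E F).splits.of_dvd
      ((Polynomial.map_ne_zero_iff (algebraMap F E).injective).mpr
        (FiniteField.X_pow_card_sub_X_ne_zero F Fintype.one_lt_card))
      (Polynomial.map_dvd _ hP_dvd)
  rw [← card_rootSet_eq_natDegree (PerfectField.separable_of_irreducible hP) hsplits,
    ← Set.toFinset_card]
  congr 1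
  ext y
  simp only [mem_filter, mem_univ, true_and, Set.mem_toFinset, mem_rootSet]
  constructor
  · rintro rfl
    exact ⟨hP.ne_zero, minpoly.aeval F y⟩
  · exact fun h ↦ (minpoly.eq_of_irreducible_of_monic hP h.2 hm).symm

theorem card_filter_minpoly_pow_eq [Finite F] [Fintype E] {f : F[X]}
    (hf : f ∈ monicsOfDegree F (finrank F E)) :
    #{y : E | minpoly F y ^ finrank F⟮y⟯ E = f} = polyVonMangoldt f := by
  rw [mem_monicsOfDegree] at hf
  have hint (y : E) : IsIntegral F y := IsIntegral.of_finite F y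
  have hirr (y : E) : Irreducible (minpoly F y) := minpoly.irreducible (hint y)
  by_cases hpow : IsPrimePow f
  · obtain ⟨P, hm, hP, k, hk, rfl⟩ := exists_monic_irreducible_pow_eq hf.1 hpow
    rw [natDegree_pow] at hf
    rw [polyVonMangoldt_pow hP hm hk, ← card_filter_minpoly_eq hP hm (E := E) ⟨k, by lia⟩]
    congr 1
    ext y
    simp only [mem_filter, mem_univ, true_and]
    constructor
    · intro h
      rw [← radical_pow_of_irreducible_monic (hirr y) (minpoly.monic (hint y))
        (finrank_pos (R := F⟮y⟯) (M := E)).ne', h,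
        radical_pow_of_irreducible_monic hP hm hk]
    · rintro rfl
      congr 1
      refine Nat.eq_of_mul_eq_mul_left (minpoly.natDegree_pos (hint y)) ?_
      rw [natDegree_minpoly_mul_finrank_adjoin, ← hf.2, mul_comm]
  · rw [polyVonMangoldt, if_neg hpow, card_eq_zero, filter_eq_empty_iff]
    rintro y - rfl
    exact hpow ((hirr y).prime.isPrimePow.pow finrank_pos.ne')

theorem gaussSum_normLift_traceLift [Fintype F] [Fintype E] [IsDomain R] (χ : MulChar F R)
    {ψ : AddChar F R} (hψ : ψ ≠ 1) :
    gaussSum (normLift E χ) (traceLift E ψ) =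
      (-1) ^ (finrank F E - 1) * gaussSum χ ψ ^ finrank F E := by
  have hmem (y : E) : minpoly F y ^ finrank F⟮y⟯ E ∈ monicsOfDegree F (finrank F E) := by
    rw [mem_monicsOfDegree, natDegree_pow, mul_comm, natDegree_minpoly_mul_finrank_adjoin]
    exact ⟨(minpoly.monic (IsIntegral.of_finite F y)).pow _, rfl⟩
  have hn : finrank F E - 1 + 1 = finrank F E := Nat.sub_add_cancel finrank_pos
  calc gaussSum (normLift E χ) (traceLift E ψ)
      = ∑ y : E, gaussWeight χ ψ (minpoly F y ^ finrank F⟮y⟯ E) := by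
        simp only [gaussSum, gaussWeight_minpoly_pow]
    _ = ∑ f ∈ monicsOfDegree F (finrank F E), polyVonMangoldt f * gaussWeight χ ψ f := by
        rw [← sum_fiberwise_of_maps_to fun y _ ↦ hmem y]
        refine sum_congr rfl fun f hf ↦ ?_
        rw [← card_filter_minpoly_pow_eq hf, ← nsmul_eq_mul]
        exact sum_eq_card_nsmul fun y hy ↦ by rw [(mem_filter.mp hy).2]
    _ = (-1) ^ (finrank F E - 1) * gaussSum χ ψ ^ finrank F E := by
        have := sum_polyVonMangoldt_mul_gaussWeight χ hψ (finrank F E - 1)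
        rwa [hn] at this

end HasseDavenport

section CubicJacobiSum

/-- The Eisenstein integers `ℤ[ω]`, where `ω * ω = -1 - ω`. -/
abbrev EisensteinInt : Type := QuadraticAlgebra ℤ (-1) (-1)

/-- The primitive cube root of unity `ω` of the Eisenstein integers. -/
def eisensteinOmega : EisensteinIntˣ where
  val := ⟨0, 1⟩
  inv := ⟨-1, -1⟩
  val_inv := by ext <;> simp [QuadraticAlgebra.re_one, QuadraticAlgebra.im_one]
  inv_val := by ext <;> simp [QuadraticAlgebra.re_one, QuadraticAlgebra.im_one]

theorem eisensteinOmega_pow_three : eisensteinOmega ^ 3 = 1 := by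
  ext <;> simp [eisensteinOmega, pow_succ, QuadraticAlgebra.re_one, QuadraticAlgebra.im_one]

/-- The specialization of the Eisenstein integers sending `ω` to a root `u` of `X ^ 2 + X + 1`. -/
def eisensteinLift {R : Type*} [CommRing R] (u : R) (hu : u * u + u + 1 = 0) :
    EisensteinInt →+* R :=
  (QuadraticAlgebra.lift (R := ℤ) (a := -1) (b := -1)
    ⟨u, by simp only [neg_smul, one_smul]; linear_combination hu⟩).toRingHom

theorem eisensteinLift_omega {R : Type*} [CommRing R] (u : R) (hu : u * u + u + 1 = 0) :
    eisensteinLift u hu eisensteinOmega = u := by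
  simp [eisensteinLift, QuadraticAlgebra.lift, eisensteinOmega]

theorem eisensteinInt_eq_add_mul_omega (z : EisensteinInt) :
    z = z.re + z.im * (eisensteinOmega : EisensteinInt) := by
  ext <;> simp [eisensteinOmega]

theorem mul_self_add_self_add_one_eq_zero {R : Type*} [CommRing R] [IsDomain R] {u : R}
    (hu : IsPrimitiveRoot u 3) : u * u + u + 1 = 0 := by
  have := hu.geom_sum_eq_zero (by norm_num)
  simp only [Finset.sum_range_succ, Finset.sum_range_zero] at this
  linear_combination this

variable {F R : Type*} [Field F] [CommRing R] {g : Fˣ}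

theorem isPrimitiveRoot_apply_generator (hg : ∀ u : Fˣ, u ∈ Subgroup.zpowers g)
    (χ : MulChar F R) : IsPrimitiveRoot (χ g) (orderOf χ) where
  pow_eq_one := by
    rw [← MulChar.pow_apply_coe, pow_orderOf_eq_one, MulChar.one_apply_coe]
  dvd_of_pow_eq_one k hk := by
    refine orderOf_dvd_of_pow_eq_one ((MulChar.eq_iff hg _ _).mpr ?_)
    rw [MulChar.pow_apply_coe, hk, MulChar.one_apply_coe]

theorem apply_two_mul_apply_four (hF : (2 : F) ≠ 0) {χ : MulChar F R} (hχ : χ ^ 3 = 1) :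
    χ 2 * χ 4 = 1 := by
  have h8 : (2 : F) * 4 = 2 ^ 3 := by norm_num
  rw [← map_mul, h8, map_pow, ← MulChar.pow_apply' _ three_ne_zero, hχ,
    MulChar.one_apply hF.isUnit]

variable [Fintype F]

theorem isPrimitiveRoot_generator_pow (hg : ∀ u : Fˣ, u ∈ Subgroup.zpowers g) {n : ℕ}
    (hn : n ∣ Fintype.card F - 1) : IsPrimitiveRoot ((g : F) ^ ((Fintype.card F - 1) / n)) n := by
  have horder : orderOf g = Fintype.card F - 1 := by
    rw [orderOf_eq_card_of_forall_mem_zpowers hg, Nat.card_eq_fintype_card, Fintype.card_units]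
  have hpos : 0 < Fintype.card F - 1 := Nat.sub_pos_of_lt Fintype.one_lt_card
  have hprim := IsPrimitiveRoot.coe_units_iff.mpr (IsPrimitiveRoot.orderOf g)
  rw [horder] at hprim
  exact hprim.pow hpos (Nat.div_mul_cancel hn).symm

theorem exists_eisensteinChar (hg : ∀ u : Fˣ, u ∈ Subgroup.zpowers g)
    (h3 : 3 ∣ Fintype.card F - 1) : ∃ χ : MulChar F EisensteinInt, χ g = eisensteinOmega := by
  have hω : eisensteinOmega ∈ rootsOfUnity (Fintype.card Fˣ) EisensteinInt := by
    obtain ⟨k, hk⟩ := h3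
    rw [_root_.mem_rootsOfUnity, Fintype.card_units, hk, pow_mul, eisensteinOmega_pow_three,
      one_pow]
  exact ⟨MulChar.ofRootOfUnity hω hg, MulChar.ofRootOfUnity_spec hω hg⟩

theorem sum_pow_mul_one_sub_pow_eq_zero {j k : ℕ} (hjk : j + k < Fintype.card F - 1) :
    ∑ x : F, x ^ j * (1 - x) ^ k = 0 := by
  have hexpand (x : F) : x ^ j * (1 - x) ^ k =
      ∑ i ∈ Finset.range (k + 1), (-1) ^ i * (k.choose i : F) * x ^ (j + i) := by
    rw [sub_eq_add_neg, add_comm, add_pow, Finset.mul_sum]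
    refine Finset.sum_congr rfl fun i _ ↦ ?_
    rw [neg_pow, one_pow]
    ring
  simp_rw [hexpand]
  rw [Finset.sum_comm]
  refine Finset.sum_eq_zero fun i hi ↦ ?_
  rw [Finset.mem_range] at hi
  rw [← Finset.mul_sum, FiniteField.sum_pow_lt_card_sub_one F _ (by lia), mul_zero]

theorem jacobiSum_self_eq_zero_of_apply_generator (hg : ∀ u : Fˣ, u ∈ Subgroup.zpowers g)
    (χ : MulChar F F) {k : ℕ} (hk : k ≠ 0) (hlt : 2 * k < Fintype.card F - 1)
    (hχ : χ g = (g : F) ^ k) : jacobiSum χ χ = 0 := by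
  have hpow (x : F) : χ x = x ^ k := by
    obtain rfl | hx := eq_or_ne x 0
    · rw [MulChar.map_zero, zero_pow hk]
    · obtain ⟨n, hn⟩ := mem_powers_iff_mem_zpowers.mpr (hg (Units.mk0 x hx))
      obtain rfl : (g : F) ^ n = x := by simpa using congrArg Units.val hn
      rw [map_pow, hχ, pow_right_comm]
  simp only [jacobiSum, hpow]
  exact sum_pow_mul_one_sub_pow_eq_zero (by lia)

theorem apply_four_mul_jacobiSum_self_of_two_eq_zero (hF : (2 : F) ≠ 0) (hR : (2 : R) = 0)
    (χ : MulChar F R) : χ 4 * jacobiSum χ χ = 1 := by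
  have hhalf : (1 - 2⁻¹ : F) = 2⁻¹ := by field_simp; norm_num
  have hcancel : ∑ x ∈ Finset.univ.erase (2⁻¹ : F), χ x * χ (1 - x) = 0 := by
    refine Finset.sum_involution (fun x _ ↦ 1 - x) (fun x _ ↦ ?_) (fun x hx _ hfix ↦ ?_)
      (fun x hx ↦ ?_) fun x _ ↦ sub_sub_cancel 1 x
    · rw [sub_sub_cancel]
      linear_combination χ x * χ (1 - x) * hR
    · exact (Finset.ne_of_mem_erase hx)
        (eq_inv_of_mul_eq_one_left (by linear_combination -hfix))
    · refine Finset.mem_erase.mpr ⟨fun h ↦ Finset.ne_of_mem_erase hx ?_, Finset.mem_univ _⟩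
      rw [← hhalf, ← h, sub_sub_cancel]
  have hfour : (4 * (2⁻¹ * 2⁻¹) : F) = 1 := by field_simp; norm_num
  rw [jacobiSum, ← Finset.add_sum_erase _ _ (Finset.mem_univ (2⁻¹ : F)), hcancel, add_zero, hhalf,
    ← map_mul, ← map_mul, hfour, map_one]

theorem two_dvd_apply_four_mul_jacobiSum_self_sub_one (hF : (2 : F) ≠ 0) (χ : MulChar F R) :
    2 ∣ χ 4 * jacobiSum χ χ - 1 := by
  let π := Ideal.Quotient.mk (Ideal.span {(2 : R)})
  have h2 : π 2 = 0 := Ideal.Quotient.eq_zero_iff_mem.mpr (Ideal.mem_span_singleton_self 2)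
  rw [map_ofNat] at h2
  rw [← Ideal.mem_span_singleton, ← Ideal.Quotient.eq_zero_iff_mem, map_sub, map_mul, map_one,
    sub_eq_zero, ← MulChar.ringHomComp_apply, ← jacobiSum_ringHomComp]
  exact apply_four_mul_jacobiSum_self_of_two_eq_zero hF h2 (χ.ringHomComp π)

theorem exists_apply_four_mul_jacobiSum_eisenstein_eq (hF : (2 : F) ≠ 0)
    (χ : MulChar F EisensteinInt) :
    ∃ a b : ℤ, χ 4 * jacobiSum χ χ = a + b * (2 * (eisensteinOmega : EisensteinInt) + 1) := by
  obtain ⟨z, hz⟩ := two_dvd_apply_four_mul_jacobiSum_self_sub_one hF χ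
  refine ⟨1 + 2 * z.re - z.im, z.im, ?_⟩
  push_cast
  linear_combination hz + 2 * eisensteinInt_eq_add_mul_omega z

theorem apply_four_mul_jacobiSum_eq_of_eisenstein (hg : ∀ u : Fˣ, u ∈ Subgroup.zpowers g)
    {χ : MulChar F EisensteinInt} (hχ : χ g = eisensteinOmega) {a b : ℤ}
    (hab : χ 4 * jacobiSum χ χ = a + b * (2 * (eisensteinOmega : EisensteinInt) + 1))
    (φ : MulChar F R) (hφ : φ g * φ g + φ g + 1 = 0) :
    φ 4 * jacobiSum φ φ = a + b * (2 * φ g + 1) := by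
  have hcomp : χ.ringHomComp (eisensteinLift (φ g) hφ) = φ := by
    rw [MulChar.eq_iff hg, MulChar.ringHomComp_apply, hχ, eisensteinLift_omega]
  calc φ 4 * jacobiSum φ φ = eisensteinLift (φ g) hφ (χ 4 * jacobiSum χ χ) := by
        rw [map_mul, ← MulChar.ringHomComp_apply, ← jacobiSum_ringHomComp, hcomp]
    _ = a + b * (2 * φ g + 1) := by
        rw [hab, two_mul, two_mul]
        simp only [map_add, map_mul, map_intCast, map_one, eisensteinLift_omega]

theorem modEq_neg_one_of_jacobiSum_eisenstein (hF : (2 : F) ≠ 0) (h3 : 3 ∣ Fintype.card F - 1)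
    (hg : ∀ u : Fˣ, u ∈ Subgroup.zpowers g)
    {χ : MulChar F EisensteinInt} (hχ : χ g = eisensteinOmega) {a b : ℤ}
    (hab : χ 4 * jacobiSum χ χ = a + b * (2 * (eisensteinOmega : EisensteinInt) + 1)) :
    a ≡ -1 [ZMOD 3] := by
  have h4 : (4 : F) ≠ 0 := by
    convert pow_ne_zero 2 hF using 1
    norm_num
  have htriv := apply_four_mul_jacobiSum_eq_of_eisenstein hg hχ hab (1 : MulChar F (ZMod 3))
    (by rw [MulChar.one_apply_coe]; decide)
  have h30 : (3 : ZMod 3) = 0 := rfl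
  obtain ⟨k, hk⟩ := h3
  have hcard : (Fintype.card F : ZMod 3) = 1 := by
    rw [← Nat.sub_add_cancel (Fintype.card_pos (α := F)), hk]
    push_cast
    rw [h30, zero_mul, zero_add]
  rw [jacobiSum_one_one, MulChar.one_apply h4.isUnit, MulChar.one_apply_coe, hcard] at htriv
  refine (ZMod.intCast_eq_intCast_iff a (-1) 3).mp ?_
  push_cast
  linear_combination -htriv - b * h30

theorem sq_add_three_mul_sq_eq_card_of_jacobiSum_eisenstein (hF : (2 : F) ≠ 0)
    (hg : ∀ u : Fˣ, u ∈ Subgroup.zpowers g)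
    {χ : MulChar F EisensteinInt} (hχ : χ g = eisensteinOmega) {a b : ℤ}
    (hab : χ 4 * jacobiSum χ χ = a + b * (2 * (eisensteinOmega : EisensteinInt) + 1))
    {φ : MulChar F ℂ} (hφ : orderOf φ = 3) :
    a ^ 2 + 3 * b ^ 2 = Fintype.card F := by
  have h4 : (4 : F) ≠ 0 := by
    convert pow_ne_zero 2 hF using 1
    norm_num
  have hchar : ringChar ℂ ≠ ringChar F := by
    rw [ringChar.eq_zero]
    exact (CharP.char_ne_zero_of_finite F (ringChar F)).symm
  have hφ1 : φ ≠ 1 := by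
    rintro rfl
    simp at hφ
  have hφ2 : φ * φ ≠ 1 := fun h ↦ by
    have := orderOf_dvd_of_pow_eq_one ((sq φ).trans h)
    rw [hφ] at this
    lia
  have hinv {x : F} (hx : x ≠ 0) : φ x * φ⁻¹ x = 1 := by
    rw [← MulChar.mul_apply, mul_inv_cancel, MulChar.one_apply hx.isUnit]
  have hζ := isPrimitiveRoot_apply_generator hg φ
  have hζ' := isPrimitiveRoot_apply_generator hg φ⁻¹
  rw [orderOf_inv, hφ] at hζ'
  rw [hφ] at hζ
  have hroot := mul_self_add_self_add_one_eq_zero hζ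
  have hroot' := mul_self_add_self_add_one_eq_zero hζ'
  have hsum : φ g + φ⁻¹ g + 1 = 0 := by
    linear_combination φ⁻¹ g * hroot - (φ g + 1) * hinv g.ne_zero
  have hnorm : ((a : ℂ) + b * (2 * φ g + 1)) * (a + b * (2 * φ⁻¹ g + 1)) = Fintype.card F := by
    rw [← apply_four_mul_jacobiSum_eq_of_eisenstein hg hχ hab φ hroot,
      ← apply_four_mul_jacobiSum_eq_of_eisenstein hg hχ hab φ⁻¹ hroot', mul_mul_mul_comm, hinv h4,
      one_mul, jacobiSum_mul_jacobiSum_inv hchar hφ1 hφ1 hφ2]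
  have : (a : ℂ) ^ 2 + 3 * b ^ 2 = Fintype.card F := by
    linear_combination hnorm - (2 * a * b + 2 * b ^ 2 : ℂ) * hsum - 4 * (b : ℂ) ^ 2 * hinv g.ne_zero
  exact_mod_cast this

theorem add_mul_eq_zero_of_jacobiSum_eisenstein (h3 : 3 ∣ Fintype.card F - 1)
    (hg : ∀ u : Fˣ, u ∈ Subgroup.zpowers g)
    {χ : MulChar F EisensteinInt} (hχ : χ g = eisensteinOmega) {a b : ℤ}
    (hab : χ 4 * jacobiSum χ χ = a + b * (2 * (eisensteinOmega : EisensteinInt) + 1)) :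
    (a : F) + b * (2 * (g : F) ^ ((Fintype.card F - 1) / 3) + 1) = 0 := by
  have hroot := mul_self_add_self_add_one_eq_zero (isPrimitiveRoot_generator_pow hg h3)
  let φ : MulChar F F := χ.ringHomComp (eisensteinLift _ hroot)
  have hφ : φ g = (g : F) ^ ((Fintype.card F - 1) / 3) := by
    rw [MulChar.ringHomComp_apply, hχ, eisensteinLift_omega]
  have hcard : 0 < Fintype.card F - 1 := Nat.sub_pos_of_lt Fintype.one_lt_card
  have hJ := apply_four_mul_jacobiSum_eq_of_eisenstein hg hχ hab φ (by rwa [hφ])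
  rwa [jacobiSum_self_eq_zero_of_apply_generator hg φ (by lia) (by lia) hφ, mul_zero, hφ,
    eq_comm] at hJ

theorem eq_and_eq_of_sq_add_three_mul_sq_eq {p a b a' b' : ℤ} (hp : 0 < p)
    (h : a ^ 2 + 3 * b ^ 2 = p) (h' : a' ^ 2 + 3 * b' ^ 2 = p) (hdvd : p ∣ a * b' - a' * b)
    (ha : a ≡ -1 [ZMOD 3]) (ha' : a' ≡ -1 [ZMOD 3]) : a = a' ∧ b = b' := by
  have hdet : a * b' - a' * b = 0 := by
    obtain ⟨k, hk⟩ := hdvd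
    have hbrahmagupta : p ^ 2 = (a * a' + 3 * b * b') ^ 2 + 3 * (p * k) ^ 2 := by
      rw [← hk]
      linear_combination (-p) * h - (a ^ 2 + 3 * b ^ 2) * h'
    rw [hk, mul_eq_zero]
    by_contra! hpk
    have hk1 : 1 ≤ k ^ 2 := Int.add_one_le_of_lt (sq_pos_of_ne_zero hpk.2)
    nlinarith [sq_nonneg (a * a' + 3 * b * b'), sq_pos_of_pos hp]
  have hsq : a ^ 2 = a' ^ 2 := mul_left_cancel₀ hp.ne' <| by
    linear_combination (-a ^ 2) * h' + a' ^ 2 * h + 3 * (a * b' + a' * b) * hdet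
  obtain rfl : a = a' := by
    obtain h | h := sq_eq_sq_iff_eq_or_eq_neg.mp hsq
    · exact h
    · rw [Int.ModEq] at ha ha'
      lia
  have ha0 : a ≠ 0 := by
    rintro rfl
    rw [Int.ModEq] at ha
    lia
  exact ⟨rfl, mul_left_cancel₀ ha0 (by linear_combination -hdet)⟩

theorem jacobiSum_eq_of_orderOf_eq_three {p : ℕ} [Fact p.Prime] (hp : p % 3 = 1) {g : (ZMod p)ˣ}
    (hg : ∀ u : (ZMod p)ˣ, u ∈ Subgroup.zpowers g) {χ : MulChar (ZMod p) ℂ} (hχ : orderOf χ = 3)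
    {a b : ℤ} (hab : a ^ 2 + 3 * b ^ 2 = p) (ha : a ≡ -1 [ZMOD 3])
    (hb : ((3 * b : ℤ) : ZMod p) = (2 * (g : ZMod p) ^ ((p - 1) / 3) + 1) * a) :
    jacobiSum χ χ = χ 2 * (a + b * (2 * χ g + 1)) := by
  have hprime : p.Prime := Fact.out
  have ne_zero_of_lt {n : ℕ} (hn : 0 < n) (hnp : n < p) : (n : ZMod p) ≠ 0 := fun h ↦
    Nat.not_dvd_of_pos_of_lt hn hnp ((ZMod.natCast_eq_zero_iff n p).mp h)
  have hlt : 3 < p := by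
    have := hprime.two_le
    lia
  have h2 : (2 : ZMod p) ≠ 0 := ne_zero_of_lt two_pos (by lia)
  have h3 : (3 : ZMod p) ≠ 0 := ne_zero_of_lt three_pos hlt
  have hdvd3 : 3 ∣ Fintype.card (ZMod p) - 1 := by
    rw [ZMod.card]
    lia
  obtain ⟨η, hη⟩ := exists_eisensteinChar hg hdvd3
  obtain ⟨a', b', hab'⟩ := exists_apply_four_mul_jacobiSum_eisenstein_eq h2 η
  have hnorm := sq_add_three_mul_sq_eq_card_of_jacobiSum_eisenstein h2 hg hη hab' hχ
  have hmod := add_mul_eq_zero_of_jacobiSum_eisenstein hdvd3 hg hη hab'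
  have hw := mul_self_add_self_add_one_eq_zero (isPrimitiveRoot_generator_pow hg hdvd3)
  rw [ZMod.card] at hnorm hmod hw
  have hdvd : (p : ℤ) ∣ a' * b - a * b' := by
    rw [← ZMod.intCast_zmod_eq_zero_iff_dvd]
    push_cast at hb ⊢
    refine (mul_eq_zero.mp ?_).resolve_left h3
    linear_combination a' * hb + (a * (2 * (g : ZMod p) ^ ((p - 1) / 3) + 1)) * hmod
      - (4 * a * b' : ZMod p) * hw
  obtain ⟨rfl, rfl⟩ := eq_and_eq_of_sq_add_three_mul_sq_eq (by exact_mod_cast hprime.pos) hnorm hab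
    hdvd (modEq_neg_one_of_jacobiSum_eisenstein h2 hdvd3 hg hη hab') ha
  have hζ := isPrimitiveRoot_apply_generator hg χ
  rw [hχ] at hζ
  rw [← apply_four_mul_jacobiSum_eq_of_eisenstein hg hη hab' χ
    (mul_self_add_self_add_one_eq_zero hζ), ← mul_assoc,
    apply_two_mul_apply_four h2 (hχ ▸ pow_orderOf_eq_one χ), one_mul]

end CubicJacobiSum

section TraceZero

open Finset Module

variable {F R : Type*} [Field F] [CommRing R] (E : Type*) [Field E] [Algebra F E]

theorem normLift_ne_one [Finite E] {χ : MulChar F R} (hχ : χ ≠ 1) : normLift E χ ≠ 1 := by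
  obtain ⟨u, hu⟩ := MulChar.ne_one_iff.mp hχ
  obtain ⟨z, hz⟩ := FiniteField.norm_surjective F E (u : F)
  have hz0 : z ≠ 0 := by
    rintro rfl
    exact u.ne_zero (hz.symm.trans Algebra.norm_zero)
  exact MulChar.ne_one_iff.mpr ⟨Units.mk0 z hz0, by rwa [Units.val_mk0, normLift_apply, hz]⟩

variable [Fintype E]

/-- The sum of `χ` over the norms of the elements of trace zero of an extension `E` of `F`. -/
def traceZeroSum (χ : MulChar F R) : R :=
  ∑ y : E with Algebra.trace F E y = 0, normLift E χ y

theorem traceZeroSum_eq_sum_ne_zero (χ : MulChar F R) :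
    traceZeroSum E χ = ∑ y : E with Algebra.trace F E y = 0 ∧ y ≠ 0, χ (Algebra.norm F y) := by
  rw [traceZeroSum, ← filter_filter]
  refine (sum_filter_of_ne fun y _ hy ↦ ?_).symm
  rintro rfl
  exact hy (MulChar.map_zero _)

theorem gaussSum_normLift_mulShift (χ : MulChar F R) (ψ : AddChar E R) {c : F} (hc : c ≠ 0) :
    gaussSum (normLift E χ) (ψ.mulShift (algebraMap F E c)) =
      (χ⁻¹ ^ finrank F E) c * gaussSum (normLift E χ) ψ := by
  have hc' : algebraMap F E c ≠ 0 := (_root_.map_ne_zero _).mpr hc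
  have hshift := gaussSum_mulShift (normLift E χ) ψ (Units.mk0 _ hc')
  rw [Units.val_mk0, normLift_apply, Algebra.norm_algebraMap, map_pow,
    ← MulChar.pow_apply' _ finrank_pos.ne'] at hshift
  rw [← hshift, ← mul_assoc, ← MulChar.mul_apply, ← mul_pow, inv_mul_cancel, one_pow,
    MulChar.one_apply hc.isUnit, one_mul]

variable [Fintype F]

theorem card_filter_trace_eq_zero :
    #{y : E | Algebra.trace F E y = 0} = Fintype.card F ^ (finrank F E - 1) := by
  have hrank := LinearMap.finrank_range_add_finrank_ker (Algebra.trace F E)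
  rw [LinearMap.range_eq_top.mpr (Algebra.trace_surjective F E), finrank_top, finrank_self] at hrank
  rw [← hrank, Nat.add_sub_cancel_left,
    ← card_eq_pow_finrank (K := F) (V := LinearMap.ker (Algebra.trace F E)), ← Fintype.card_subtype]
  simp only [LinearMap.mem_ker]

theorem card_filter_trace_eq_zero_and_ne_zero :
    (#{y : E | Algebra.trace F E y = 0 ∧ y ≠ 0} : R) =
      (Fintype.card F : R) ^ (finrank F E - 1) - 1 := by
  have herase : ({y | Algebra.trace F E y = 0 ∧ y ≠ 0} : Finset E) =
      ({y | Algebra.trace F E y = 0} : Finset E).erase 0 := by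
    ext y
    simp [and_comm]
  rw [herase, cast_card_erase_of_mem (by simp), card_filter_trace_eq_zero, Nat.cast_pow]

theorem card_mul_traceZeroSum [IsDomain R] {χ : MulChar F R} (hχ : χ ≠ 1) {ψ : AddChar F R}
    (hψ : ψ.IsPrimitive) :
    Fintype.card F * traceZeroSum E χ =
      (∑ c : F, (χ⁻¹ ^ finrank F E) c) * gaussSum (normLift E χ) (traceLift E ψ) := by
  calc Fintype.card F * traceZeroSum E χ
      = ∑ y : E, ∑ c : F, normLift E χ y * ψ (c * Algebra.trace F E y) := by
        simp_rw [← mul_sum, AddChar.sum_mulShift _ hψ, traceZeroSum, sum_filter, mul_sum]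
        refine sum_congr rfl fun y _ ↦ ?_
        split_ifs <;> simp [mul_comm]
    _ = ∑ c : F, gaussSum (normLift E χ) ((traceLift E ψ).mulShift (algebraMap F E c)) := by
        rw [sum_comm]
        simp only [gaussSum, AddChar.mulShift_apply, traceLift_apply, ← Algebra.smul_def, map_smul,
          smul_eq_mul]
    _ = _ := by
        rw [sum_mul]
        refine sum_congr rfl fun c _ ↦ ?_
        obtain rfl | hc := eq_or_ne c 0
        · have hzero : gaussSum (normLift E χ) 1 = 0 := by
            simpa [gaussSum] using MulChar.sum_eq_zero_of_ne_one (normLift_ne_one E hχ)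
          rw [map_zero, AddChar.mulShift_zero, hzero, MulChar.map_zero, zero_mul]
        · exact gaussSum_normLift_mulShift E χ _ hc

omit [Fintype F] in
theorem traceZeroSum_eq_zero [Finite F] {χ : MulChar F ℂ} (hχ : χ ^ finrank F E ≠ 1) :
    traceZeroSum E χ = 0 := by
  cases nonempty_fintype F
  have hχ1 : χ ≠ 1 := by
    rintro rfl
    exact hχ (one_pow _)
  have hinv : χ⁻¹ ^ finrank F E ≠ 1 := by rwa [inv_pow, Ne, inv_eq_one]
  have hcard := card_mul_traceZeroSum E hχ1
    (AddChar.FiniteField.primitiveChar_to_Complex_isPrimitive F)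
  rw [MulChar.sum_eq_zero_of_ne_one hinv, zero_mul] at hcard
  exact (mul_eq_zero.mp hcard).resolve_left (Nat.cast_ne_zero.mpr Fintype.card_ne_zero)

theorem card_mul_traceZeroSum_of_pow_eq_one [IsDomain R] {χ : MulChar F R} (hχ1 : χ ≠ 1)
    (hχ : χ ^ finrank F E = 1) {ψ : AddChar F R} (hψ : ψ.IsPrimitive) :
    Fintype.card F * traceZeroSum E χ =
      (Fintype.card F - 1) * ((-1) ^ (finrank F E - 1) * gaussSum χ ψ ^ finrank F E) := by
  have hψ1 : ψ ≠ 1 := by simpa using hψ one_ne_zero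
  have hunits : (Fintype.card Fˣ : R) = Fintype.card F - 1 := by
    rw [Fintype.card_units, Nat.cast_sub Fintype.card_pos, Nat.cast_one]
  rw [card_mul_traceZeroSum E hχ1 hψ, inv_pow, hχ, inv_one, MulChar.sum_one_eq_card_units, hunits,
    gaussSum_normLift_traceLift χ hψ1]

theorem gaussSum_pow_three [IsDomain R] {χ : MulChar F R} (hχ : orderOf χ = 3) {ψ : AddChar F R}
    (hψ : ψ.IsPrimitive) : gaussSum χ ψ ^ 3 = Fintype.card F * jacobiSum χ χ := by
  have hneg : χ (-1) = 1 :=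
    MulChar.val_neg_one_eq_one_of_odd_order (by decide : Odd 3) (hχ ▸ pow_orderOf_eq_one χ)
  simpa [hχ, hneg] using gaussSum_pow_eq_prod_jacobiSum (χ := χ) (by lia) hψ

theorem traceZeroSum_of_orderOf_eq_three {χ : MulChar F ℂ} (hχ : orderOf χ = 3)
    (h3 : 3 ∣ finrank F E) :
    traceZeroSum E χ = -((-1) ^ finrank F E * (Fintype.card F : ℂ) ^ ((finrank F E - 3) / 3) *
      (Fintype.card F - 1) * jacobiSum χ χ ^ (finrank F E / 3)) := by
  have hχ1 : χ ≠ 1 := by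
    rintro rfl
    simp at hχ
  have hψ := AddChar.FiniteField.primitiveChar_to_Complex_isPrimitive F
  have hT := card_mul_traceZeroSum_of_pow_eq_one E hχ1 (orderOf_dvd_iff_pow_eq_one.mp (hχ ▸ h3)) hψ
  have hpos : 0 < finrank F E := finrank_pos
  obtain ⟨k, hk⟩ := h3
  obtain ⟨j, rfl⟩ := Nat.exists_eq_add_one_of_ne_zero (n := k) (by lia)
  have hexp : (3 * (j + 1) - 3) / 3 = j := by lia
  have hsign : (-1 : ℂ) ^ (3 * (j + 1) - 1) = -(-1) ^ (3 * (j + 1)) := by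
    rw [eq_neg_iff_add_eq_zero, ← Nat.sub_add_cancel (show 1 ≤ 3 * (j + 1) by lia), pow_succ]
    simp
  rw [hk, pow_mul (gaussSum _ _), gaussSum_pow_three hχ hψ, hsign] at hT
  rw [hk, hexp, Nat.mul_div_cancel_left _ three_pos]
  refine mul_left_cancel₀ (Nat.cast_ne_zero.mpr (Fintype.card_ne_zero (α := F))) (hT.trans ?_)
  ring

theorem ite_eq_one_of_pow_three_eq_one {z : ℂ} (hz : z ^ 3 = 1) :
    (if z = 1 then 3 else 0 : ℝ) = 1 + 2 * z.re := by
  split_ifs with h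
  · rw [h, one_re]
    norm_num
  · have hconj : (starRingEnd ℂ) z = z ^ 2 := by
      rw [← inv_eq_conj (norm_eq_one_of_pow_eq_one hz three_ne_zero)]
      exact inv_eq_of_mul_eq_one_left ((pow_succ z 2).symm.trans hz)
    have hroot : z ^ 2 + z + 1 = 0 := (mul_eq_zero.mp (by linear_combination hz)).resolve_left
      (sub_ne_zero.mpr h)
    have hre : ((2 * z.re : ℝ) : ℂ) = z + z ^ 2 := by rw [← add_conj, hconj]
    have hsum : ((1 + 2 * z.re : ℝ) : ℂ) = 0 := by
      rw [ofReal_add, ofReal_one, hre]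
      linear_combination hroot
    exact (ofReal_eq_zero.mp hsum).symm

theorem mul_sq_eq_one_iff {v w : ℂ} (hw : w ^ 3 = 1) : v * w ^ 2 = 1 ↔ v = w := by
  constructor <;> intro h
  · linear_combination w * h - v * hw
  · linear_combination w ^ 2 * h + hw

theorem card_filter_trace_eq_zero_and_apply_norm_eq {χ : MulChar F ℂ} (hχ : χ ^ 3 = 1) {w : ℂ}
    (hw : w ^ 3 = 1) :
    (#{y : E | (Algebra.trace F E y = 0 ∧ y ≠ 0) ∧ χ (Algebra.norm F y) = w} : ℝ) =
      ((Fintype.card F : ℝ) ^ (finrank F E - 1) - 1 + 2 * (traceZeroSum E χ * w ^ 2).re) / 3 := by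
  have hind {y : E} (hy : y ∈ ({y | Algebra.trace F E y = 0 ∧ y ≠ 0} : Finset E)) :
      (if χ (Algebra.norm F y) = w then 3 else 0 : ℝ) =
        1 + 2 * (χ (Algebra.norm F y) * w ^ 2).re := by
    have hnorm : IsUnit (Algebra.norm F y) :=
      (Algebra.norm_ne_zero_iff.mpr (mem_filter.mp hy).2.2).isUnit
    have hcube : (χ (Algebra.norm F y) * w ^ 2) ^ 3 = 1 := by
      rw [mul_pow, ← MulChar.pow_apply' _ three_ne_zero, hχ, MulChar.one_apply hnorm, one_mul,
        pow_right_comm, hw, one_pow]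
    simpa only [mul_sq_eq_one_iff hw] using ite_eq_one_of_pow_three_eq_one hcube
  rw [eq_div_iff three_ne_zero, ← filter_filter, ← sum_boole, sum_mul, traceZeroSum_eq_sum_ne_zero,
    sum_mul, re_sum, ← card_filter_trace_eq_zero_and_ne_zero, mul_sum, card_eq_sum_ones,
    Nat.cast_sum, ← sum_add_distrib]
  refine sum_congr rfl fun y hy ↦ ?_
  rw [Nat.cast_one, ← hind hy, ite_mul, one_mul, zero_mul]

end TraceZero

section SubfieldCount

open Finset Module

variable {F : Type*} [Field F]

theorem exists_intermediateField_finrank_eq (K : Type*) [Field K] [Finite K] [Algebra F K]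
    {t : ℕ} (ht : t ∣ finrank F K) : ∃ E : IntermediateField F K, finrank F E = t := by
  have := Finite.of_injective _ (algebraMap F K).injective
  cases nonempty_fintype F
  set σ := FiniteField.frobeniusAlgEquivOfAlgebraic F K
  have hcard : Nat.card (Subgroup.zpowers (σ ^ t)) * t = finrank F K := by
    rw [Nat.card_zpowers, orderOf_pow, FiniteField.orderOf_frobeniusAlgEquivOfAlgebraic,
      Nat.gcd_eq_right ht, Nat.div_mul_cancel ht]
  refine ⟨.fixedField (Subgroup.zpowers (σ ^ t)), ?_⟩
  refine Nat.eq_of_mul_eq_mul_left (Nat.card_pos (α := Subgroup.zpowers (σ ^ t))) ?_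
  rw [hcard, ← IntermediateField.finrank_fixedField_eq_card, mul_comm, finrank_mul_finrank]

theorem mem_range_algebraMap_iff_pow_card_eq (E : Type*) {K : Type*} [Field E] [Fintype E]
    [Field K] [Finite K] [Algebra E K] {x : K} :
    x ∈ Set.range (algebraMap E K) ↔ x ^ Fintype.card E = x := by
  refine ⟨?_, fun hx ↦ (IsGalois.mem_range_algebraMap_iff_fixed x).mpr fun f ↦ ?_⟩
  · rintro ⟨y, rfl⟩
    rw [← map_pow, FiniteField.pow_card]
  · obtain ⟨n, rfl⟩ := (FiniteField.bijective_frobeniusAlgEquivOfAlgebraic_pow E K).2 f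
    rw [AlgEquiv.coe_pow]
    exact Function.iterate_fixed hx n

theorem exists_eq_generator_pow_iff [Finite F] {R : Type*} [CommRing R] {g : Fˣ}
    (hg : ∀ u : Fˣ, u ∈ Subgroup.zpowers g) (χ : MulChar F R) {h : ℕ} {u : F} :
    (∃ k : ℕ, u = (g : F) ^ (h + orderOf χ * k)) ↔ u ≠ 0 ∧ χ u = χ g ^ h := by
  have hroot := isPrimitiveRoot_apply_generator hg χ
  constructor
  · rintro ⟨k, rfl⟩
    refine ⟨pow_ne_zero _ g.ne_zero, ?_⟩
    rw [map_pow, pow_add, pow_mul, hroot.pow_eq_one, one_pow, mul_one]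
  · rintro ⟨hu, hχu⟩
    obtain ⟨n, hn⟩ : Units.mk0 u hu * (g ^ h)⁻¹ ∈ Submonoid.powers g :=
      mem_powers_iff_mem_zpowers.mpr (hg _)
    have hun : u = (g : F) ^ (h + n) := by
      simpa [pow_add, mul_comm] using congrArg Units.val (eq_mul_inv_iff_mul_eq.mp hn).symm
    have hχn : χ g ^ n = 1 := by
      refine ((g.isUnit.map χ).pow h).mul_left_cancel ?_
      rw [← pow_add, mul_one, ← hχu, hun, map_pow]
    obtain ⟨k, rfl⟩ := hroot.dvd_of_pow_eq_one n hχn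
    exact ⟨k, hun⟩

theorem pow_eq_pow_iff_of_coprime_of_pow_eq_one {v w : F} {m n : ℕ} (hmn : m.Coprime n)
    (hv : v ^ n = 1) (hw : w ^ n = 1) (hw0 : w ≠ 0) : v ^ m = w ^ m ↔ v = w := by
  rw [← div_eq_one_iff_eq (pow_ne_zero m hw0), ← div_pow, ← div_eq_one_iff_eq hw0,
    ← pow_eq_one_iff_of_coprime (a := v / w) hmn, div_pow v w n, hv, hw, div_one, and_iff_left rfl]

variable {E K R : Type*} [Field E] [Field K] [Algebra F E] [Algebra E K] [Algebra F K]

theorem NN_finrank_eq_card [Fintype F] [Fintype E] [Fintype K] (g : F) (s h : ℕ) (a : F) :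
    NN F K g s h (finrank F E) a = #{y : E | Algebra.trace F K (algebraMap E K y) = a ∧
      ∃ k : ℕ, Algebra.norm F (algebraMap E K y) = g ^ (h + s * k)} := by
  rw [NN, Nat.card_eq_fintype_card, Fintype.card_subtype, ← Module.card_eq_pow_finrank,
    ← card_image_of_injective _ (algebraMap E K).injective]
  congr 1
  ext x
  simp only [mem_filter_univ, ← mem_range_algebraMap_iff_pow_card_eq E, mem_image, Set.mem_range]
  aesop

variable [IsScalarTower F E K]

theorem trace_algebraMap_eq_zero_iff [FiniteDimensional F E] [FiniteDimensional E K]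
    (hK : (finrank E K : F) ≠ 0) {y : E} :
    Algebra.trace F K (algebraMap E K y) = 0 ↔ Algebra.trace F E y = 0 := by
  rw [← Algebra.trace_trace (S := E), Algebra.trace_algebraMap, map_nsmul, nsmul_eq_mul,
    mul_eq_zero, or_iff_right hK]

theorem norm_algebraMap_eq_norm_pow [FiniteDimensional F E] [FiniteDimensional E K] (y : E) :
    Algebra.norm F (algebraMap E K y) = Algebra.norm F y ^ finrank E K := by
  rw [← Algebra.norm_norm (S := E), Algebra.norm_algebraMap, map_pow]

variable [Fintype F] [Fintype K] [CommRing R] {g : Fˣ}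
  (hg : ∀ u : Fˣ, u ∈ Subgroup.zpowers g) (hK : (finrank E K : F) ≠ 0) {h : ℕ}

include hg hK

theorem NN_zero_eq_card [Fintype E] (χ : MulChar F R) :
    NN F K g (orderOf χ) h (finrank F E) 0 =
      #{y : E | (Algebra.trace F E y = 0 ∧ y ≠ 0) ∧
        χ (Algebra.norm F y) ^ finrank E K = χ g ^ h} := by
  rw [NN_finrank_eq_card]
  congr 1
  refine filter_congr fun y _ ↦ ?_
  rw [trace_algebraMap_eq_zero_iff hK, exists_eq_generator_pow_iff hg, norm_algebraMap_eq_norm_pow,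
    pow_ne_zero_iff finrank_pos.ne', Algebra.norm_ne_zero_iff, map_pow, and_assoc]

theorem NN_zero_of_orderOf_dvd [Finite E] {χ : MulChar F R} (hM : orderOf χ ∣ finrank E K)
    (hh : orderOf χ ∣ h) :
    (NN F K g (orderOf χ) h (finrank F E) 0 : R) =
      (Fintype.card F : R) ^ (finrank F E - 1) - 1 := by
  cases nonempty_fintype E
  rw [NN_zero_eq_card hg hK χ, ← card_filter_trace_eq_zero_and_ne_zero (F := F) E]
  congr 2
  refine filter_congr fun y _ ↦ and_iff_left_of_imp fun hy ↦ ?_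
  have hnorm : IsUnit (Algebra.norm F y) := (Algebra.norm_ne_zero_iff.mpr hy.2).isUnit
  rw [← MulChar.pow_apply' _ finrank_pos.ne', orderOf_dvd_iff_pow_eq_one.mp hM,
    MulChar.one_apply hnorm, ((isPrimitiveRoot_apply_generator hg χ).pow_eq_one_iff_dvd h).mpr hh]

theorem NN_zero_eq_traceZeroSum [Fintype E] {χ : MulChar F ℂ} (hχ : orderOf χ = 3)
    (hM : (finrank E K).Coprime 3) {i : ℕ} (hi : finrank E K * i ≡ h [MOD 3]) :
    (NN F K g 3 h (finrank F E) 0 : ℝ) =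
      ((Fintype.card F : ℝ) ^ (finrank F E - 1) - 1 +
        2 * (traceZeroSum E χ * χ g ^ (2 * i)).re) / 3 := by
  have hχ3 : χ ^ 3 = 1 := hχ ▸ pow_orderOf_eq_one χ
  have hroot : χ g ^ 3 = 1 := hχ ▸ (isPrimitiveRoot_apply_generator hg χ).pow_eq_one
  have hw : (χ g ^ i) ^ 3 = 1 := by rw [pow_right_comm, hroot, one_pow]
  have hw0 : χ g ^ i ≠ 0 := ((g.isUnit.map χ).pow i).ne_zero
  rw [← hχ, NN_zero_eq_card hg hK χ, mul_comm 2 i, pow_mul,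
    ← card_filter_trace_eq_zero_and_apply_norm_eq E hχ3 hw]
  congr 2
  refine filter_congr fun y _ ↦ and_congr_right fun hy ↦ ?_
  have hv : χ (Algebra.norm F y) ^ 3 = 1 := by
    rw [← MulChar.pow_apply' _ three_ne_zero, hχ3,
      MulChar.one_apply (Algebra.norm_ne_zero_iff.mpr hy.2).isUnit]
  rw [pow_eq_pow_mod h hroot, ← hi, ← pow_eq_pow_mod _ hroot, mul_comm, pow_mul,
    pow_eq_pow_iff_of_coprime_of_pow_eq_one hM hv hw hw0]

theorem NN_zero_of_not_three_dvd [Finite E] {χ : MulChar F ℂ} (hχ : orderOf χ = 3)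
    (hM : (finrank E K).Coprime 3) {i : ℕ} (hi : finrank E K * i ≡ h [MOD 3])
    (h3 : ¬ 3 ∣ finrank F E) :
    (NN F K g 3 h (finrank F E) 0 : ℂ) =
      ((Fintype.card F : ℂ) ^ (finrank F E - 1) - 1) / 3 := by
  cases nonempty_fintype E
  have hzero : traceZeroSum E χ = 0 :=
    traceZeroSum_eq_zero E (mt orderOf_dvd_of_pow_eq_one (hχ ▸ h3))
  have hNN := NN_zero_eq_traceZeroSum hg hK hχ hM hi
  rw [hzero, zero_mul, zero_re, mul_zero, add_zero] at hNN
  exact_mod_cast congrArg ((↑) : ℝ → ℂ) hNN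

theorem NN_zero_of_three_dvd [Finite E] {χ : MulChar F ℂ} (hχ : orderOf χ = 3)
    (hM : (finrank E K).Coprime 3) {i : ℕ} (hi : finrank E K * i ≡ h [MOD 3])
    (h3 : 3 ∣ finrank F E) :
    (NN F K g 3 h (finrank F E) 0 : ℂ) = (1 / 3) * ((Fintype.card F : ℂ) ^ (finrank F E - 1) - 1 -
      2 * (-1 : ℂ) ^ finrank F E * (Fintype.card F : ℂ) ^ ((finrank F E - 3) / 3) *
        (Fintype.card F - 1) * ((jacobiSum χ χ ^ (finrank F E / 3) * χ g ^ (2 * i)).re : ℂ)) := by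
  cases nonempty_fintype E
  set c : ℝ := (-1) ^ finrank F E * (Fintype.card F : ℝ) ^ ((finrank F E - 3) / 3) *
    (Fintype.card F - 1) with hc
  have hre : (traceZeroSum E χ * χ g ^ (2 * i)).re =
      -(c * (jacobiSum χ χ ^ (finrank F E / 3) * χ g ^ (2 * i)).re) := by
    rw [← re_ofReal_mul, ← neg_re, traceZeroSum_of_orderOf_eq_three E hχ h3, hc]
    push_cast
    ring_nf
  have hNN := congrArg ((↑) : ℝ → ℂ) (NN_zero_eq_traceZeroSum hg hK hχ hM hi)
  rw [hre, hc] at hNN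
  push_cast at hNN
  rw [hNN]
  ring

end SubfieldCount

theorem two_mul_exp_two_pi_mul_I_div_three_add_one :
    2 * exp (2 * Real.pi * I / 3) + 1 = I * (Real.sqrt 3 : ℂ) := by
  have hangle : 2 * Real.pi * I / 3 = ((Real.pi - Real.pi / 3 : ℝ) : ℂ) * I := by
    push_cast
    ring
  rw [hangle, exp_mul_I, ← ofReal_cos, ← ofReal_sin, Real.cos_pi_sub, Real.sin_pi_sub,
    Real.cos_pi_div_three, Real.sin_pi_div_three]
  push_cast
  ring

/-- The values of `N_t` for `s = 3`, `q = p ≡ 1 (mod 3)` and `a = 0`, assuming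
`p ∤ m/t` and `d ∣ h`, in terms of `π_3 = χ_3(2)·(a_3 + i·b_3·√3)` and `ζ = e^{2πi/3}`. -/
theorem stmt14 (p m h t d l i0 : ℕ) [Fact p.Prime] (hm : 2 ≤ m)
    (ht : t ∣ m) (ht0 : 0 < t)
    (K : Type*) [Field K] [Fintype K] [Algebra (ZMod p) K]
    (hK : Fintype.card K = p ^ m)
    (hp : p % 3 = 1)
    (g : (ZMod p)ˣ) (hg : ∀ u : (ZMod p)ˣ, u ∈ Subgroup.zpowers g)
    (hh : h < 3)
    (ζ : ℂ) (hζ : ζ = Complex.exp (2 * Real.pi * Complex.I / 3))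
    (χ3 : MulChar (ZMod p) ℂ) (hχ3o : orderOf χ3 = 3) (hχ3g : χ3 (g : ZMod p) = ζ)
    (a3 b3 : ℤ) (hab : a3 ^ 2 + 3 * b3 ^ 2 = (p : ℤ))
    (ha3 : a3 ≡ -1 [ZMOD 3])
    (hb3 : ((3 * b3 : ℤ) : ZMod p) = (2 * (g : ZMod p) ^ ((p - 1) / 3) + 1) * (a3 : ZMod p))
    (π3 : ℂ) (hπ3 : π3 = χ3 (2 : ZMod p) * ((a3 : ℂ) + Complex.I * (b3 : ℂ) * (Real.sqrt 3 : ℂ)))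
    (hd : d = Nat.gcd (m / t) 3) (hl : l = Nat.gcd t (3 / d))
    (hpmt : ¬ p ∣ m / t) (hdh : d ∣ h)
    (hi0 : i0 < 3 / d ∧ (m / (d * t)) * i0 ≡ h / d [MOD 3 / d]) :
    (d = 1 ∧ l = 1 →
      (NN (ZMod p) K (g : ZMod p) 3 h t 0 : ℂ) = ((p : ℂ) ^ (t - 1) - 1) / 3) ∧
    (d = 1 ∧ l = 3 →
      (NN (ZMod p) K (g : ZMod p) 3 h t 0 : ℂ) =
        (1 / 3) * ((p : ℂ) ^ (t - 1) - 1 -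
          2 * (-1 : ℂ) ^ t * (p : ℂ) ^ ((t - 3) / 3) * ((p : ℂ) - 1) *
            ((π3 ^ (t / 3) * ζ ^ (2 * i0)).re : ℂ))) ∧
    (d = 3 ∧ l = 1 →
      (NN (ZMod p) K (g : ZMod p) 3 h t 0 : ℂ) = (p : ℂ) ^ (t - 1) - 1) := by
  obtain rfl : Module.finrank (ZMod p) K = m := by
    refine Nat.pow_right_injective (Fact.out : p.Prime).two_le (Eq.trans ?_ hK)
    rw [Module.card_eq_pow_finrank (K := ZMod p), ZMod.card]
  obtain ⟨E, rfl⟩ := exists_intermediateField_finrank_eq K ht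
  rw [← Module.finrank_mul_finrank (ZMod p) E K, Nat.mul_div_cancel_left _ ht0] at hd hpmt
  have hE : (Module.finrank E K : ZMod p) ≠ 0 := by rwa [Ne, ZMod.natCast_eq_zero_iff]
  have hJ : jacobiSum χ3 χ3 = π3 := by
    rw [jacobiSum_eq_of_orderOf_eq_three hp hg hχ3o hab ha3 hb3, hχ3g, hζ,
      two_mul_exp_two_pi_mul_I_div_three_add_one, hπ3]
    ring
  have hi (hd1 : d = 1) : Module.finrank E K * i0 ≡ h [MOD 3] := by
    simpa [hd1, ← Module.finrank_mul_finrank (ZMod p) E K, ht0] using hi0.2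
  refine ⟨fun ⟨hd1, hl1⟩ ↦ ?_, fun ⟨hd1, hl3⟩ ↦ ?_, fun ⟨hd3, _⟩ ↦ ?_⟩
  · have h3 : ¬ 3 ∣ Module.finrank (ZMod p) E := by
      rintro h3
      simp [hl1, hd1, Nat.gcd_eq_right h3] at hl
    simpa using NN_zero_of_not_three_dvd hg hE hχ3o (hd.symm.trans hd1) (hi hd1) h3
  · have h3 : 3 ∣ Module.finrank (ZMod p) E :=
      Nat.gcd_eq_right_iff_dvd.mp (by simpa [hl3, hd1] using hl.symm)
    simpa [hJ, hχ3g] using NN_zero_of_three_dvd hg hE hχ3o (hd.symm.trans hd1) (hi hd1) h3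
  · subst hd3
    have h3 : orderOf χ3 ∣ Module.finrank E K := hχ3o ▸ Nat.gcd_eq_right_iff_dvd.mp hd.symm
    simpa [hχ3o] using NN_zero_of_orderOf_dvd hg hE h3 (hχ3o ▸ hdh)

end
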